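/- Let U : (0,∞) → ℝ be measurable with ∫₀^∞ U(s)² (s + s²) ds < ∞, and let u(x) := U(|x|) for x ∈ ℝ³. Define V(x) := −∫_{ℝ³} u(y)² |x−y|^{-1} dy. Then V is radial, V(x) = v(|x|) for a function v that is differentiable on (0,∞), and for every r > 0: v(r) + r v'(r) = −4π ∫_r^∞ U(s)² s ds. In particular v(r) + r v'(r) ≤ 0 for all r > 0. -/

import Mathlib

open MeasureTheory Filter

noncomputable section

/-- `ℝ³` with the Euclidean norm. -/
abbrev E3 : Type := EuclideanSpace ℝ (Fin 3)

/-!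
By Archimedes' hat-box theorem, the shell of radius `s` contributes
`2πs ∫_{-s}^s (r² - 2rz + s²)^(-1/2) dz = 4πs² / max r s` to the potential at distance `r` from the
origin. This is Newton's shell theorem, and it gives
`r v(r) = -4π ∫₀^∞ min(r, s) U(s)² s ds`. Since `∂ᵣ min(r, s) = 1_{r < s}` for `s ≠ r`, only the
shells of radius `s > r` survive in `v + r v' = (r v)'`.
-/

open Set Topology
open scoped ENNReal Real RealInnerProductSpace

lemma lintegral_comp_sq_add_sq {G : ℝ → ℝ≥0∞} (hG : Measurable G) :
    ∫⁻ p : ℝ × ℝ, G (p.1 ^ 2 + p.2 ^ 2) =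
      ENNReal.ofReal (2 * π) * ∫⁻ ρ in Ioi (0 : ℝ), ENNReal.ofReal ρ * G (ρ ^ 2) := by
  have hpolar (p : ℝ × ℝ) :
      (polarCoord.symm p).1 ^ 2 + (polarCoord.symm p).2 ^ 2 = p.1 ^ 2 := by
    rw [polarCoord_symm_apply]
    linear_combination p.1 ^ 2 * Real.sin_sq_add_cos_sq p.2
  rw [← lintegral_comp_polarCoord_symm]
  simp only [hpolar, smul_eq_mul, polarCoord_target]
  rw [Measure.volume_eq_prod, setLIntegral_prod _ (by fun_prop)]
  simp only [setLIntegral_const, Real.volume_Ioo, sub_neg_eq_add, ← two_mul]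
  rw [lintegral_mul_const _ (by fun_prop), mul_comm]

lemma lintegral_Ioi_mul_comp_sqrt_sq_add_sq (z : ℝ) (F : ℝ → ℝ≥0∞) :
    ∫⁻ ρ in Ioi (0 : ℝ), ENNReal.ofReal ρ * F √(z ^ 2 + ρ ^ 2) =
      ∫⁻ s in Ioi |z|, ENNReal.ofReal s * F s := by
  have hpos {ρ : ℝ} (hρ : ρ ∈ Ioi 0) : 0 < z ^ 2 + ρ ^ 2 := by
    have : 0 < ρ := hρ
    positivity
  have himage : (fun ρ ↦ √(z ^ 2 + ρ ^ 2)) '' Ioi 0 = Ioi |z| := by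
    ext s
    constructor
    · rintro ⟨ρ, hρ, rfl⟩
      exact Real.lt_sqrt_of_sq_lt (by rw [sq_abs]; exact lt_add_of_pos_right _ (pow_pos hρ 2))
    · intro hs
      have hs0 : 0 < s := (abs_nonneg z).trans_lt hs
      have hzs : z ^ 2 < s ^ 2 := sq_lt_sq.2 (hs.trans_le (le_abs_self s))
      refine ⟨√(s ^ 2 - z ^ 2), Real.sqrt_pos.2 (sub_pos.2 hzs), ?_⟩
      simp only [Real.sq_sqrt (sub_pos.2 hzs).le, add_sub_cancel, Real.sqrt_sq hs0.le]
  have hderiv : ∀ ρ ∈ Ioi (0 : ℝ), HasDerivWithinAt (fun ρ ↦ √(z ^ 2 + ρ ^ 2))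
      (ρ / √(z ^ 2 + ρ ^ 2)) (Ioi 0) ρ := fun ρ hρ ↦ by
    have hsq : HasDerivAt (fun ρ : ℝ ↦ z ^ 2 + ρ ^ 2) (2 * ρ) ρ := by
      simpa using (hasDerivAt_pow 2 ρ).const_add (z ^ 2)
    simpa only [mul_div_mul_left _ _ (two_ne_zero' ℝ)] using
      (hsq.sqrt (hpos hρ).ne').hasDerivWithinAt
  have hmono : MonotoneOn (fun ρ ↦ √(z ^ 2 + ρ ^ 2)) (Ioi 0) := fun a ha b _ hab ↦
    Real.sqrt_le_sqrt (add_le_add_right (pow_le_pow_left₀ (le_of_lt ha) hab 2) _)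
  rw [← himage, lintegral_image_eq_lintegral_deriv_mul_of_monotoneOn measurableSet_Ioi hderiv hmono]
  refine setLIntegral_congr_fun measurableSet_Ioi fun ρ hρ ↦ ?_
  have hsqrt : 0 < √(z ^ 2 + ρ ^ 2) := Real.sqrt_pos.2 (hpos hρ)
  rw [← mul_assoc, ← ENNReal.ofReal_mul (div_nonneg (le_of_lt hρ) hsqrt.le),
    div_mul_cancel₀ _ hsqrt.ne']

lemma lintegral_lintegral_Ioi_abs {G : ℝ → ℝ → ℝ≥0∞} (hG : Measurable (Function.uncurry G)) :
    ∫⁻ z, ∫⁻ s in Ioi |z|, G z s = ∫⁻ s in Ioi 0, ∫⁻ z in Ioo (-s) s, G z s := by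
  have hcone : MeasurableSet {p : ℝ × ℝ | |p.1| < p.2} :=
    measurableSet_lt (by fun_prop) (by fun_prop)
  have hindicator (z s : ℝ) : (Ioi |z|).indicator (G z) s = (Ioo (-s) s).indicator (G · s) z := by
    simp only [indicator, mem_Ioi, mem_Ioo, abs_lt]
  have hsupport : (Function.support fun s ↦ ∫⁻ z in Ioo (-s) s, G z s) ⊆ Ioi 0 := by
    intro s hs
    by_contra hs0
    have hempty : Ioo (-s) s = ∅ := Ioo_eq_empty fun h ↦ hs0 (neg_lt_self_iff.1 h)
    exact hs (by simp only [hempty, setLIntegral_empty])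
  rw [setLIntegral_eq_of_support_subset hsupport]
  simp only [← lintegral_indicator measurableSet_Ioi, ← lintegral_indicator measurableSet_Ioo,
    ← hindicator]
  exact lintegral_lintegral_swap (hG.indicator hcone).aemeasurable

lemma measurePreserving_toLp_vecCons :
    MeasurePreserving (fun p : ℝ × ℝ × ℝ ↦ (!₂[p.1, p.2.1, p.2.2] : E3)) := by
  have hsplit : MeasurePreserving (Prod.map id (MeasurableEquiv.finTwoArrow (α := ℝ)).symm)
      (volume : Measure (ℝ × ℝ × ℝ)) volume :=
    (MeasurePreserving.id volume).prod (volume_preserving_finTwoArrow ℝ).symm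
  have hcomp := (PiLp.volume_preserving_toLp (Fin 3)).comp
    ((volume_preserving_piFinSuccAbove (fun _ : Fin 3 ↦ ℝ) 0).symm.comp hsplit)
  convert hcomp using 1
  · rfl
  funext p
  refine congrArg (WithLp.toLp 2) (funext fun i ↦ ?_)
  fin_cases i <;> rfl

/- Archimedes' hat-box theorem: the height `z` of a uniform point on the sphere of radius `s` is
uniform on `(-s, s)`. -/
lemma lintegral_comp_norm_apply_zero {F : ℝ → ℝ → ℝ≥0∞} (hF : Measurable (Function.uncurry F)) :
    ∫⁻ y : E3, F ‖y‖ (y 0) =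
      ENNReal.ofReal (2 * π) *
        ∫⁻ s in Ioi 0, ENNReal.ofReal s * ∫⁻ z in Ioo (-s) s, F s z := by
  have hnorm (p : ℝ × ℝ × ℝ) :
      ‖(!₂[p.1, p.2.1, p.2.2] : E3)‖ = √(p.1 ^ 2 + (p.2.1 ^ 2 + p.2.2 ^ 2)) := by
    simp [EuclideanSpace.norm_eq, Fin.sum_univ_three, add_assoc]
  calc ∫⁻ y : E3, F ‖y‖ (y 0)
      = ∫⁻ z : ℝ, ∫⁻ q : ℝ × ℝ, F √(z ^ 2 + (q.1 ^ 2 + q.2 ^ 2)) z := by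
        rw [← measurePreserving_toLp_vecCons.lintegral_comp (by fun_prop)]
        simp only [hnorm]
        exact lintegral_prod _ (by fun_prop)
    _ = ∫⁻ z : ℝ, ENNReal.ofReal (2 * π) * ∫⁻ s in Ioi |z|, ENNReal.ofReal s * F s z := by
        refine lintegral_congr fun z ↦ ?_
        rw [lintegral_comp_sq_add_sq (G := fun t ↦ F √(z ^ 2 + t) z) (by fun_prop),
          lintegral_Ioi_mul_comp_sqrt_sq_add_sq z (F · z)]
    _ = _ := by
        rw [lintegral_const_mul' _ _ ENNReal.ofReal_ne_top,
          lintegral_lintegral_Ioi_abs (G := fun z s ↦ ENNReal.ofReal s * F s z) (by fun_prop)]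
        simp only [lintegral_const_mul' _ _ ENNReal.ofReal_ne_top]

lemma lintegral_comp_norm_inner {F : ℝ → ℝ → ℝ≥0∞} (hF : Measurable (Function.uncurry F))
    (x : E3) :
    ∫⁻ y : E3, F ‖y‖ ⟪x, y⟫ =
      ENNReal.ofReal (2 * π) *
        ∫⁻ s in Ioi 0, ENNReal.ofReal s * ∫⁻ z in Ioo (-s) s, F s (‖x‖ * z) := by
  set e : E3 := EuclideanSpace.single 0 ‖x‖
  have he : ‖e‖ = ‖x‖ := by simp [e]
  set T := (ℝ ∙ (e - x))ᗮ.reflection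
  have hTe : T e = x := Submodule.reflection_sub he
  have hinner (y : E3) : ⟪x, T y⟫ = ‖x‖ * y 0 := by
    calc ⟪x, T y⟫ = ⟪T e, T y⟫ := by rw [hTe]
      _ = ⟪e, y⟫ := T.inner_map_map e y
      _ = ‖x‖ * y 0 := by simp [e, EuclideanSpace.inner_single_left]
  rw [← T.measurePreserving.lintegral_comp (by fun_prop)]
  simp only [T.norm_map, hinner]
  exact lintegral_comp_norm_apply_zero (F := fun s z ↦ F s (‖x‖ * z)) (by fun_prop)

lemma hasDerivAt_neg_inv_mul_sqrt {r s z : ℝ} (hr : r ≠ 0)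
    (hpos : 0 < r ^ 2 - 2 * (r * z) + s ^ 2) :
    HasDerivAt (fun z ↦ -r⁻¹ * √(r ^ 2 - 2 * (r * z) + s ^ 2))
      (√(r ^ 2 - 2 * (r * z) + s ^ 2))⁻¹ z := by
  have hquad : HasDerivAt (fun z ↦ r ^ 2 - 2 * (r * z) + s ^ 2) (-(2 * r)) z := by
    simpa using
      ((((hasDerivAt_id z).const_mul r).const_mul 2).const_sub (r ^ 2)).add_const (s ^ 2)
  refine ((hquad.sqrt hpos.ne').const_mul (-r⁻¹)).congr_deriv ?_
  field_simp

lemma add_sub_abs_sub_div {r : ℝ} (hr : 0 < r) (s : ℝ) :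
    (r + s - |r - s|) / r = 2 * s / max r s := by
  have hmax : max r s ≠ 0 := (lt_max_of_lt_left hr).ne'
  rw [abs_sub_comm, ← two_nsmul_inf_eq_add_sub_abs_sub, nsmul_eq_mul, Nat.cast_ofNat,
    div_eq_div_iff hr.ne' hmax, mul_assoc, min_mul_max, mul_right_comm, mul_assoc]

lemma lintegral_Ioo_inv_sqrt {r s : ℝ} (hr : 0 ≤ r) (hs : 0 < s) :
    ∫⁻ z in Ioo (-s) s, ENNReal.ofReal (√(r ^ 2 - 2 * (r * z) + s ^ 2))⁻¹ =
      ENNReal.ofReal (2 * s / max r s) := by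
  rcases hr.eq_or_lt with rfl | hr
  · have hconst (z : ℝ) : √(0 ^ 2 - 2 * (0 * z) + s ^ 2) = s := by simp [Real.sqrt_sq hs.le]
    simp only [hconst, setLIntegral_const, Real.volume_Ioo, sub_neg_eq_add, max_eq_right hs.le]
    rw [← ENNReal.ofReal_mul (inv_nonneg.2 hs.le), ← two_mul, inv_mul_eq_div]
  have hle : -s ≤ s := neg_le_self hs.le
  have hderiv (z : ℝ) (hz : z ∈ Ioo (-s) s) :=
    hasDerivAt_neg_inv_mul_sqrt (s := s) (z := z) hr.ne'
      (by nlinarith [sq_nonneg (r - s), mul_pos hr (sub_pos.2 hz.2)])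
  have hcont : ContinuousOn (fun z ↦ -r⁻¹ * √(r ^ 2 - 2 * (r * z) + s ^ 2)) (Icc (-s) s) := by
    fun_prop
  have hint := intervalIntegral.integrableOn_deriv_of_nonneg hcont hderiv
    fun z _ ↦ inv_nonneg.2 (Real.sqrt_nonneg _)
  have hplus : √(r ^ 2 - 2 * (r * -s) + s ^ 2) = r + s := by
    rw [← Real.sqrt_sq (add_nonneg hr.le hs.le)]
    ring_nf
  have hminus : √(r ^ 2 - 2 * (r * s) + s ^ 2) = |r - s| := by
    rw [← Real.sqrt_sq_eq_abs]
    ring_nf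
  rw [setLIntegral_congr Ioo_ae_eq_Ioc, ← ofReal_integral_eq_lintegral_ofReal hint
    (ae_of_all _ fun z ↦ inv_nonneg.2 (Real.sqrt_nonneg _)), ← intervalIntegral.integral_of_le hle,
    intervalIntegral.integral_eq_sub_of_hasDerivAt_of_le hle hcont hderiv
      ((intervalIntegrable_iff_integrableOn_Ioc_of_le hle).2 hint),
    hplus, hminus, ← add_sub_abs_sub_div hr s]
  ring_nf

lemma norm_sub_eq_sqrt {E : Type*} [NormedAddCommGroup E] [InnerProductSpace ℝ E] (x y : E) :
    ‖x - y‖ = √(‖x‖ ^ 2 - 2 * ⟪x, y⟫ + ‖y‖ ^ 2) := by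
  rw [← norm_sub_sq_real, Real.sqrt_sq (norm_nonneg _)]

theorem lintegral_inv_norm_sub_mul_comp_norm {f : ℝ → ℝ≥0∞} (hf : Measurable f) (x : E3) :
    ∫⁻ y : E3, ENNReal.ofReal ‖x - y‖⁻¹ * f ‖y‖ =
      ∫⁻ s in Ioi 0, ENNReal.ofReal (4 * π * (s ^ 2 / max ‖x‖ s)) * f s := by
  simp only [norm_sub_eq_sqrt]
  rw [lintegral_comp_norm_inner
      (F := fun s t ↦ ENNReal.ofReal (√(‖x‖ ^ 2 - 2 * t + s ^ 2))⁻¹ * f s) (by fun_prop),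
    ← lintegral_const_mul' _ _ ENNReal.ofReal_ne_top]
  refine setLIntegral_congr_fun measurableSet_Ioi fun s hs ↦ ?_
  have hs0 : 0 < s := hs
  rw [lintegral_mul_const _ (by fun_prop), lintegral_Ioo_inv_sqrt (norm_nonneg x) hs,
    ← mul_assoc, ← mul_assoc, ← ENNReal.ofReal_mul (by positivity),
    ← ENNReal.ofReal_mul (by positivity)]
  congr 2
  ring

theorem map_norm_withDensity_inv_norm_sub (x : E3) :
    ((volume : Measure E3).withDensity fun y ↦ ENNReal.ofReal ‖x - y‖⁻¹).map (‖·‖) =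
      (volume.restrict (Ioi 0)).withDensity
        fun s ↦ ENNReal.ofReal (4 * π * (s ^ 2 / max ‖x‖ s)) := by
  refine Measure.ext_of_lintegral _ fun f hf ↦ ?_
  rw [lintegral_map hf measurable_norm,
    lintegral_withDensity_eq_lintegral_mul _ (by fun_prop) (by fun_prop),
    lintegral_withDensity_eq_lintegral_mul _ (by fun_prop) hf]
  exact lintegral_inv_norm_sub_mul_comp_norm hf x

section VectorValued

variable {E : Type*} [NormedAddCommGroup E] [NormedSpace ℝ E]

/- Where the potential diverges, both integrals take the junk value `0`. -/
theorem integral_inv_norm_sub_smul_comp_norm {f : ℝ → E}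
    (hf : AEStronglyMeasurable f (volume.restrict (Ioi 0))) (x : E3) :
    ∫ y : E3, ‖x - y‖⁻¹ • f ‖y‖ = ∫ s in Ioi 0, (4 * π * (s ^ 2 / max ‖x‖ s)) • f s := by
  have hmap := map_norm_withDensity_inv_norm_sub x
  calc ∫ y : E3, ‖x - y‖⁻¹ • f ‖y‖
      = ∫ y, f ‖y‖ ∂(volume : Measure E3).withDensity fun y ↦ ENNReal.ofReal ‖x - y‖⁻¹ := by
        rw [integral_withDensity_eq_integral_toReal_smul (by fun_prop)
          (ae_of_all _ fun _ ↦ ENNReal.ofReal_lt_top)]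
        simp only [ENNReal.toReal_ofReal (inv_nonneg.2 (norm_nonneg _))]
    _ = ∫ s, f s ∂(volume.restrict (Ioi 0)).withDensity
          fun s ↦ ENNReal.ofReal (4 * π * (s ^ 2 / max ‖x‖ s)) := by
        rw [← hmap, integral_map measurable_norm.aemeasurable
          (hmap ▸ hf.mono_ac (withDensity_absolutelyContinuous _ _))]
    _ = _ := by
        rw [integral_withDensity_eq_integral_toReal_smul (by fun_prop)
          (ae_of_all _ fun _ ↦ ENNReal.ofReal_lt_top)]
        refine setIntegral_congr_fun measurableSet_Ioi fun s hs ↦ ?_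
        have hs0 : 0 < s := hs
        rw [ENNReal.toReal_ofReal (by positivity)]

theorem hasDerivAt_integral_min_smul {μ : Measure ℝ} [NullSingletonClass μ] {g : ℝ → E} {a r : ℝ}
    (har : a < r) (hgm : AEStronglyMeasurable g μ) (hg : IntegrableOn g (Ioi a) μ)
    (hmin : Integrable (fun s ↦ min r s • g s) μ) :
    HasDerivAt (fun t ↦ ∫ s, min t s • g s ∂μ) (∫ s in Ioi r, g s ∂μ) r := by
  have hlip (s : ℝ) : LipschitzOnWith (Real.nnabs ((Ioi a).indicator (fun s ↦ ‖g s‖) s))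
      (fun t ↦ min t s • g s) (Ioi a) := by
    refine LipschitzOnWith.of_dist_le_mul fun t ht t' ht' ↦ ?_
    rw [dist_eq_norm, ← sub_smul, norm_smul, Real.coe_nnabs, Real.dist_eq, Real.norm_eq_abs]
    rcases le_or_gt s a with hs | hs
    · rw [min_eq_right (hs.trans (le_of_lt ht)), min_eq_right (hs.trans (le_of_lt ht'))]
      simpa using mul_nonneg (abs_nonneg _) (abs_nonneg _)
    · rw [indicator_of_mem (mem_Ioi.2 hs), abs_norm, mul_comm]
      refine mul_le_mul_of_nonneg_left ?_ (norm_nonneg _)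
      simpa only [sub_self, abs_zero, max_eq_left (abs_nonneg (t - t'))] using
        abs_min_sub_min_le_max t s t' s
  have hderiv : ∀ s ≠ r, HasDerivAt (fun t ↦ min t s • g s) ((Ioi r).indicator g s) r := by
    intro s hs
    rcases hs.lt_or_gt with hs | hs
    · rw [indicator_of_notMem (notMem_Ioi.2 hs.le)]
      refine (hasDerivAt_const r (s • g s)).congr_of_eventuallyEq ?_
      filter_upwards [lt_mem_nhds hs] with t ht
      rw [min_eq_right ht.le]
    · rw [indicator_of_mem (mem_Ioi.2 hs)]
      have hlin : HasDerivAt (fun t : ℝ ↦ t • g s) (g s) r := by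
        simpa using (hasDerivAt_id r).smul_const (g s)
      refine hlin.congr_of_eventuallyEq ?_
      filter_upwards [gt_mem_nhds hs] with t ht
      rw [min_eq_left ht.le]
  rw [← integral_indicator measurableSet_Ioi]
  exact (hasDerivAt_integral_of_dominated_loc_of_lip (Ioi_mem_nhds har)
    (Eventually.of_forall fun t ↦ (by fun_prop)) hmin
    (hgm.indicator measurableSet_Ioi) (ae_of_all _ hlip)
    (IntegrableOn.integrable_indicator hg.norm measurableSet_Ioi)
    ((Measure.ae_ne μ r).mono hderiv)).2

lemma aestronglyMeasurable_of_smul {α : Type*} [MeasurableSpace α] {μ : Measure α}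
    {c : α → ℝ} {g : α → E} (hc : AEMeasurable c μ) (hc0 : ∀ᵐ x ∂μ, c x ≠ 0)
    (hcg : AEStronglyMeasurable (fun x ↦ c x • g x) μ) :
    AEStronglyMeasurable g μ :=
  (hc.inv.aestronglyMeasurable.smul hcg).congr <| hc0.mono fun x hx ↦ inv_smul_smul₀ hx (g x)

theorem hasDerivAt_setIntegral_Ioi_min_smul {g : ℝ → E} {r : ℝ} (hr : 0 < r)
    (hg : IntegrableOn (fun s ↦ min 1 s • g s) (Ioi 0)) :
    HasDerivAt (fun t ↦ ∫ s in Ioi 0, min t s • g s) (∫ s in Ioi r, g s) r := by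
  have hpos : ∀ᵐ s ∂volume.restrict (Ioi (0 : ℝ)), 0 < s := ae_restrict_mem measurableSet_Ioi
  have hgm : AEStronglyMeasurable g (volume.restrict (Ioi 0)) :=
    aestronglyMeasurable_of_smul (by fun_prop)
      (hpos.mono fun s hs ↦ (lt_min one_pos hs).ne') hg.aestronglyMeasurable
  have htail : IntegrableOn g (Ioi (r / 2)) (volume.restrict (Ioi 0)) := by
    refine Integrable.mono' ((hg.norm.const_mul (min 1 (r / 2))⁻¹).restrict) hgm.restrict ?_
    filter_upwards [ae_restrict_mem measurableSet_Ioi] with s hs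
    have hc : 0 < min 1 (r / 2) := lt_min one_pos (half_pos hr)
    have hcs : min 1 (r / 2) ≤ min 1 s := min_le_min_left 1 (le_of_lt hs)
    rw [norm_smul, Real.norm_of_nonneg (hc.le.trans hcs), le_inv_mul_iff₀ hc]
    gcongr
  have hmin : IntegrableOn (fun s ↦ min r s • g s) (Ioi 0) := by
    refine Integrable.mono' (hg.norm.const_mul (max r 1)) (by fun_prop) ?_
    filter_upwards [hpos] with s hs
    have hle : min r s ≤ max r 1 * min 1 s := by
      rw [mul_min_of_nonneg _ _ (hr.le.trans (le_max_left r 1)), mul_one]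
      exact min_le_min (le_max_left r 1) (le_mul_of_one_le_left hs.le (le_max_right r 1))
    rw [norm_smul, norm_smul, Real.norm_of_nonneg (le_min hr.le hs.le),
      Real.norm_of_nonneg (le_min one_pos.le hs.le), ← mul_assoc]
    gcongr
  have hderiv := hasDerivAt_integral_min_smul (half_lt_self hr) hgm htail hmin
  rwa [Measure.restrict_restrict_of_subset (Ioi_subset_Ioi hr.le)] at hderiv

end VectorValued

/-- The radial profile of the Newtonian potential `-∫ f ‖y‖ / ‖x - y‖ dy` on `ℝ³`, i.e. its value at
distance `r` from the origin, encoded through Newton's shell theorem: the shell of radius `s` acts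
as if its charge `4πs² f(s) ds` sat at distance `max r s`. -/
def newtonProfile (f : ℝ → ℝ) (r : ℝ) : ℝ :=
  -(4 * π) * ∫ s in Ioi 0, s ^ 2 / max r s * f s

theorem neg_integral_div_norm_sub_eq_newtonProfile {f : ℝ → ℝ}
    (hf : AEStronglyMeasurable f (volume.restrict (Ioi 0))) (x : E3) :
    -∫ y : E3, f ‖y‖ / ‖x - y‖ = newtonProfile f ‖x‖ := by
  have hshell := integral_inv_norm_sub_smul_comp_norm hf x
  simp only [smul_eq_mul, mul_assoc (4 * π), integral_const_mul] at hshell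
  rw [newtonProfile, neg_mul, ← hshell]
  simp only [div_eq_inv_mul]

lemma mul_newtonProfile (f : ℝ → ℝ) {r : ℝ} (hr : 0 < r) :
    r * newtonProfile f r = -(4 * π) * ∫ s in Ioi 0, min r s * (f s * s) := by
  rw [newtonProfile, mul_left_comm, ← integral_const_mul]
  congr 1
  refine setIntegral_congr_fun measurableSet_Ioi fun s _ ↦ ?_
  have hmax : max r s ≠ 0 := (lt_max_of_lt_left hr).ne'
  field_simp
  linear_combination (-f s * s) * min_mul_max r s

theorem hasDerivAt_mul_newtonProfile {f : ℝ → ℝ} {r : ℝ} (hr : 0 < r)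
    (hf : IntegrableOn (fun s ↦ min 1 s * (f s * s)) (Ioi 0)) :
    HasDerivAt (fun t ↦ t * newtonProfile f t) (-(4 * π) * ∫ s in Ioi r, f s * s) r := by
  refine ((hasDerivAt_setIntegral_Ioi_min_smul hr hf).const_mul _).congr_of_eventuallyEq ?_
  filter_upwards [lt_mem_nhds hr] with t ht using mul_newtonProfile f ht

lemma hasDerivAt_of_id_mul {𝕜 : Type*} [NontriviallyNormedField 𝕜] {v : 𝕜 → 𝕜} {c r : 𝕜}
    (hr : r ≠ 0) (h : HasDerivAt (fun t ↦ t * v t) c r) : HasDerivAt v ((c - v r) / r) r := by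
  refine ((h.div (hasDerivAt_id r) hr).congr_of_eventuallyEq ?_).congr_deriv ?_
  · filter_upwards [isOpen_ne.mem_nhds hr] with t ht
    exact (mul_div_cancel_left₀ (v t) ht).symm
  · simp only [id_eq]
    field_simp

theorem newton_virial_identity_general {f : ℝ → ℝ}
    (hf : IntegrableOn (fun s ↦ min 1 s * (f s * s)) (Ioi 0)) :
    ∃ v v' : ℝ → ℝ,
      (∀ x : E3, -∫ y : E3, f ‖y‖ / ‖x - y‖ = v ‖x‖) ∧
      ∀ r : ℝ, 0 < r →
        HasDerivAt v (v' r) r ∧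
        v r + r * v' r = -(4 * π) * ∫ s in Ioi r, f s * s ∧
        ((∀ s ∈ Ioi r, 0 ≤ f s) → v r + r * v' r ≤ 0) := by
  have hfm : AEStronglyMeasurable f (volume.restrict (Ioi 0)) := by
    refine aestronglyMeasurable_of_smul (c := fun s ↦ min 1 s * s) (by fun_prop) ?_ ?_
    · filter_upwards [ae_restrict_mem measurableSet_Ioi] with s hs
      exact (mul_pos (lt_min one_pos hs) hs).ne'
    · simpa only [smul_eq_mul, mul_assoc, mul_comm (f _)] using hf.aestronglyMeasurable
  refine ⟨newtonProfile f, fun r ↦ (-(4 * π) * (∫ s in Ioi r, f s * s) - newtonProfile f r) / r,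
    neg_integral_div_norm_sub_eq_newtonProfile hfm, fun r hr ↦ ?_⟩
  have hvirial : newtonProfile f r +
      r * ((-(4 * π) * (∫ s in Ioi r, f s * s) - newtonProfile f r) / r) =
        -(4 * π) * ∫ s in Ioi r, f s * s := by
    rw [mul_div_cancel₀ _ hr.ne', add_sub_cancel]
  refine ⟨hasDerivAt_of_id_mul hr.ne' (hasDerivAt_mul_newtonProfile hr hf), hvirial,
    fun hnonneg ↦ ?_⟩
  rw [hvirial]
  exact mul_nonpos_of_nonpos_of_nonneg (by linarith [Real.pi_pos]) <|
    setIntegral_nonneg measurableSet_Ioi fun s hs ↦ mul_nonneg (hnonneg s hs) (hr.trans hs).le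

lemma integrableOn_min_one_mul_of_add_sq {f : ℝ → ℝ}
    (hf : IntegrableOn (fun s ↦ f s * (s + s ^ 2)) (Ioi 0)) :
    IntegrableOn (fun s ↦ min 1 s * (f s * s)) (Ioi 0) := by
  have hpos : ∀ᵐ s ∂volume.restrict (Ioi (0 : ℝ)), 0 < s := ae_restrict_mem measurableSet_Ioi
  refine (hf.bdd_mul (f := fun s ↦ min 1 s / (1 + s)) (c := 1)
    (Measurable.aestronglyMeasurable (by fun_prop)) ?_).congr ?_
  · filter_upwards [hpos] with s hs
    rw [Real.norm_of_nonneg (by positivity), div_le_one (by positivity)]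
    exact (min_le_left 1 s).trans (le_add_of_nonneg_right hs.le)
  · filter_upwards [hpos] with s hs
    have hne : 1 + s ≠ 0 := (add_pos one_pos hs).ne'
    field_simp

/-- Newton's theorem computation in the proof of Proposition 1.5.
For radial `u(x) = U(|x|)` with `∫₀^∞ U(s)² (s+s²) ds < ∞`, the Newtonian potential
`V = -(u² ∗ |x|⁻¹)` is radial, `V(x) = v(|x|)` with `v` differentiable on `(0,∞)`, and
`v(r) + r v'(r) = -4π ∫_r^∞ U(s)² s ds ≤ 0` for every `r > 0`. -/
theorem newton_virial_identity
    (U : ℝ → ℝ) (hUmeas : Measurable U)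
    (hUint : IntegrableOn (fun s : ℝ => (U s)^2 * (s + s^2)) (Set.Ioi (0:ℝ)))
    (u : E3 → ℝ) (hu : ∀ x : E3, u x = U ‖x‖)
    (V : E3 → ℝ) (hV : ∀ x : E3, V x = -∫ y : E3, (u y)^2 / ‖x - y‖) :
    ∃ v v' : ℝ → ℝ,
      (∀ x : E3, V x = v ‖x‖) ∧
      ∀ r : ℝ, 0 < r →
        HasDerivAt v (v' r) r ∧
        v r + r * v' r = -(4 * Real.pi) * ∫ s in Set.Ioi r, (U s)^2 * s ∧
        v r + r * v' r ≤ 0 := by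
  obtain ⟨v, v', hv, hvirial⟩ := newton_virial_identity_general
    (integrableOn_min_one_mul_of_add_sq (f := fun s ↦ U s ^ 2) hUint)
  exact ⟨v, v', fun x ↦ by simpa only [hV, hu] using hv x, fun r hr ↦
    (hvirial r hr).imp_right (And.imp_right fun h ↦ h fun s _ ↦ sq_nonneg (U s))⟩
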